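/- The ideal $\mathcal{J}_n \subset \mathbb{C}[x_1,\ldots,x_n,y_1,\ldots,y_n] \otimes \Lambda[\theta_1,\ldots,\theta_n]$ generated by diagonal-$S_n$-antisymmetric elements is generated, as a module over $\mathbb{C}[\mathbf{x},\mathbf{y}]$, by the elements $\mathrm{Alt}\big(g(x_{k+1},\ldots,x_n,\,y_{k+1},\ldots,y_n)\,\theta_1\cdots\theta_k\big)$, ranging over $0 \le k \le n$ and over polynomials $g$ in $2(n-k)$ variables that are antisymmetric for the diagonal $S_{n-k}$-action. -/

import Mathlib

open MvPolynomial

/-- `ℂ[x₁,…,x_m,y₁,…,y_m]`: `X (inl i) = xᵢ`, `X (inr i) = yᵢ`. -/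
abbrev PP (m : ℕ) : Type := MvPolynomial (Fin m ⊕ Fin m) ℂ

/-- The super-polynomial ring `B = ℂ[x,y] ⊗ Λ[θ₁,…,θ_n]`. -/
abbrev SP (n : ℕ) : Type := TensorProduct ℂ (PP n) (ExteriorAlgebra ℂ (Fin n → ℂ))

/-- The odd variable `θᵢ ∈ B`. -/
noncomputable def θv {n : ℕ} (i : Fin n) : SP n :=
  TensorProduct.tmul ℂ 1 (ExteriorAlgebra.ι ℂ (Pi.single i (1 : ℂ)))

/-- The diagonal action of `σ ∈ S_n` on the super-polynomial ring. -/
noncomputable def diagAct {n : ℕ} (σ : Equiv.Perm (Fin n)) : SP n →ₐ[ℂ] SP n :=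
  Algebra.TensorProduct.map
    (rename (Sum.map σ σ))
    (ExteriorAlgebra.map (LinearMap.funLeft ℂ ℂ ⇑σ⁻¹))

/-- Antisymmetry for the diagonal `S_n`-action on `B`. -/
def IsAntisym {n : ℕ} (g : SP n) : Prop :=
  ∀ σ : Equiv.Perm (Fin n), diagAct σ g = ((Equiv.Perm.sign σ : ℤ) : ℂ) • g

/-- Antisymmetry of a polynomial in `2m` variables for the diagonal `S_m`-action. -/
def IsAntisymP {m : ℕ} (p : PP m) : Prop :=
  ∀ σ : Equiv.Perm (Fin m),
    rename (Sum.map σ σ) p = ((Equiv.Perm.sign σ : ℤ) : ℂ) • p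

/-- Antisymmetrization with respect to the diagonal `S_n`-action:
`Alt(f) = ∑_σ sgn(σ) σ(f)`. -/
noncomputable def Alt {n : ℕ} (f : SP n) : SP n :=
  ∑ σ : Equiv.Perm (Fin n), ((Equiv.Perm.sign σ : ℤ) : ℂ) • diagAct σ f

/-- The ordered product `θ₁ θ₂ ⋯ θ_k`. -/
noncomputable def θprod (n k : ℕ) (hk : k ≤ n) : SP n :=
  (List.ofFn fun l : Fin k => θv (Fin.castLE hk l)).prod

/-- The inclusion `{1,…,n-k} ↪ {k+1,…,n}`. -/
def emb (n k : ℕ) (hk : k ≤ n) (l : Fin (n - k)) : Fin n :=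
  ⟨k + (l : ℕ), by omega⟩

/-- The generator `Alt(g(x_{k+1},…,x_n, y_{k+1},…,y_n) θ₁⋯θ_k)` of `𝒥_n`
associated to `0 ≤ k ≤ n` and an `S_{n-k}`-antisymmetric polynomial `g`. -/
noncomputable def altGen (n k : ℕ) (hk : k ≤ n) (g : PP (n - k)) : SP n :=
  Alt ((Algebra.TensorProduct.includeLeft (S := ℂ)
        (rename (Sum.map (emb n k hk) (emb n k hk)) g)) * θprod n k hk)

/-!
Write `z_i = (x_i, y_i)`, and let `N` be the `ℂ[x,y]`-span of the elements
`Alt(g(z_{k+1}, …, z_n) θ_1 ⋯ θ_k)` with `g` antisymmetric.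

First, `Alt(f) ∈ N` for every `f`. Renumbering reduces to `f = p θ_1 ⋯ θ_k`, and if `p` involves
only `z_{k+1}, …, z_n` it may be antisymmetrized in them. The other even variables are removed one
index at a time: for `i ≤ k` and `ψ` free of `z_i`, the invariance of `∑_j p(z_j)` gives
`∑_j Alt(p(z_j) ψ θ_1 ⋯ θ_k) ∈ N`; here the terms whose `z_j` is still allowed lie in `N` by
induction, and the remaining ones all equal the term `j = i` by symmetry.

Second, `N` is stable under `θ_i`. In `θ_i Alt(g θ_1 ⋯ θ_k)` the terms with `σ⁻¹ i ≤ k` vanish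
because `θ_i` is repeated, leaving a multiple of `∑_{σ(k+1) = i} sgn(σ) σ(g θ_1 ⋯ θ_{k+1})`. The
same sum arises, up to a multiple, if `z_{σ(k+1)}` is replaced by `z_i` in every `σ(g)` of
`Alt(g θ_1 ⋯ θ_{k+1})`: the terms with `σ⁻¹ i > k + 1` then vanish because two arguments of `g`
coincide. Expanding `g` in its first argument shows that the result is in `N`.
-/

section AntisymmetricIdeal

open Equiv Equiv.Perm

section PermutationSums

/-- Sorts the permutations `σ` by the preimage of `i`; the class of `l` is the translate by
`swap l c` of the class of `c`. -/
lemma sum_perm_eq_card_smul_sum {α M : Type*} [Fintype α] [DecidableEq α] [AddCommMonoid M]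
    {T : Perm α → M} {c i : α} (S : Finset α)
    (hS : ∀ σ : Perm α, σ c = i → ∀ l ∈ S, T (σ * swap l c) = T σ)
    (hS' : ∀ σ : Perm α, ∀ l ∉ S, σ l = i → T σ = 0) :
    ∑ σ, T σ = S.card • ∑ σ with σ c = i, T σ := by
  have hfiber (l : α) (hl : l ∈ S) : ∑ σ with σ⁻¹ i = l, T σ = ∑ σ with σ c = i, T σ := by
    refine (Finset.sum_equiv (Equiv.mulRight (swap l c)) (fun σ => ?_) fun σ hσ => ?_).symm
    · simp only [Finset.mem_filter, Finset.mem_univ, true_and, coe_mulRight]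
      rw [Perm.inv_eq_iff_eq, Perm.mul_apply, swap_apply_left, eq_comm]
    · exact (hS σ (by simpa using hσ) l hl).symm
  have hvanish (l : α) (hl : l ∉ S) : ∑ σ with σ⁻¹ i = l, T σ = 0 :=
    Finset.sum_eq_zero fun σ hσ =>
      hS' σ l hl (Perm.inv_eq_iff_eq.mp (Finset.mem_filter.mp hσ).2).symm
  calc ∑ σ, T σ = ∑ l, ∑ σ with σ⁻¹ i = l, T σ := (Finset.sum_fiberwise _ _ _).symm
    _ = ∑ l ∈ S, ∑ σ with σ⁻¹ i = l, T σ :=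
        (Finset.sum_subset S.subset_univ fun l _ => hvanish l).symm
    _ = S.card • ∑ σ with σ c = i, T σ := Finset.sum_eq_card_nsmul hfiber

lemma sign_swap_map {α β : Type*} [Fintype α] [DecidableEq α] [Fintype β] [DecidableEq β]
    {f : α → β} (hf : Function.Injective f) (a b : α) :
    sign (swap (f a) (f b)) = sign (swap a b) := by
  by_cases hab : a = b
  · rw [hab, swap_self, swap_self, sign_refl, sign_refl]
  · rw [sign_swap hab, sign_swap (hf.ne hab)]

end PermutationSums

section DiagonalRenaming

variable {m n : ℕ}

/-- The substitution `x_i ↦ x_{f i}`, `y_i ↦ y_{f i}`; for a permutation `f` this is the diagonal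
action. -/
noncomputable abbrev diagRename (f : Fin m → Fin n) : PP m →ₐ[ℂ] PP n :=
  rename (Sum.map f f)

lemma diagRename_id (p : PP n) : diagRename id p = p := by
  rw [diagRename, Sum.map_id_id, rename_id_apply]

lemma diagRename_diagRename {l : ℕ} (f : Fin l → Fin m) (g : Fin m → Fin n) (p : PP l) :
    diagRename g (diagRename f p) = diagRename (g ∘ f) p := by
  simp only [rename_rename, Sum.map_comp_map]

/-- The polynomials in the variables `x_i, y_i` with `i ∈ T`. -/
noncomputable def supportedOn (T : Set (Fin n)) : Subalgebra ℂ (PP n) :=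
  supported ℂ (Sum.elim id id ⁻¹' T)

lemma supportedOn_univ : supportedOn (Set.univ : Set (Fin n)) = ⊤ := by
  rw [supportedOn, Set.preimage_univ, supported_univ]

lemma toSubmodule_supportedOn_insert (i : Fin n) (T : Set (Fin n)) :
    Subalgebra.toSubmodule (supportedOn (insert i T)) =
      Subalgebra.toSubmodule (supportedOn {i}) * Subalgebra.toSubmodule (supportedOn T) := by
  simp only [supportedOn, supported, Set.insert_eq, Set.preimage_union, Set.image_union,
    Algebra.adjoin_union_coe_submodule]

lemma diagRename_congr {T : Set (Fin m)} {f g : Fin m → Fin n} (hfg : Set.EqOn f g T) {p : PP m}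
    (hp : p ∈ supportedOn T) : diagRename f p = diagRename g p := by
  refine AlgHom.adjoin_le_equalizer (diagRename f) (diagRename g) ?_ hp
  rintro _ ⟨i | i, hi, rfl⟩ <;> simpa using hfg hi

lemma diagRename_mem_supportedOn {f : Fin m → Fin n} {T : Set (Fin n)} (hf : ∀ i, f i ∈ T)
    (p : PP m) : diagRename f p ∈ supportedOn T := by
  classical
  refine mem_supported.2 fun v hv => ?_
  obtain ⟨i | i, -, rfl⟩ := Finset.mem_image.1 (vars_rename _ _ hv) <;> exact hf i

lemma supportedOn_range_le (f : Fin m → Fin n) :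
    supportedOn (Set.range f) ≤ (diagRename f).range := by
  refine Algebra.adjoin_le ?_
  rintro _ ⟨_ | _, ⟨i, rfl⟩, rfl⟩
  · exact ⟨X (Sum.inl i), rename_X _ _⟩
  · exact ⟨X (Sum.inr i), rename_X _ _⟩

lemma IsAntisymP.diagRename_comp {g : PP m} (hg : IsAntisymP g) (τ : Perm (Fin m))
    (f : Fin m → Fin n) : diagRename (f ∘ τ) g = sign τ • diagRename f g := by
  rw [← diagRename_diagRename, hg τ, map_smul, Int.cast_smul_eq_zsmul, Units.smul_def]

lemma IsAntisymP.diagRename_comp_swap {g : PP m} (hg : IsAntisymP g) {v : Fin m → Fin n}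
    (hv : Function.Injective v) (f : Fin n → Fin n) (a b : Fin m) :
    diagRename (f ∘ swap (v a) (v b) ∘ v) g =
      sign (swap (v a) (v b)) • diagRename (f ∘ v) g := by
  rw [hv.swap_comp, ← Function.comp_assoc, hg.diagRename_comp, sign_swap_map hv]

lemma IsAntisymP.diagRename_eq_zero_of_not_injective {g : PP m} (hg : IsAntisymP g)
    {f : Fin m → Fin n} (hf : ¬ Function.Injective f) : diagRename f g = 0 := by
  simp only [Function.Injective, not_forall] at hf
  obtain ⟨a, b, hab, hne⟩ := hf
  have h := hg.diagRename_comp (swap a b) f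
  rw [comp_swap_eq_update, hab, Function.update_eq_self, ← hab, Function.update_eq_self,
    sign_swap hne, Units.neg_smul, one_smul] at h
  exact self_eq_neg.1 h

end DiagonalRenaming

section OddVariables

variable {n k : ℕ}

/-- The monomial `θ_{v 1} ⋯ θ_{v k}`, taken from the alternating map `ιMulti` rather than as a list
product so that it is visibly alternating in `v`. -/
noncomputable def θWord (v : Fin k → Fin n) : SP n :=
  Algebra.TensorProduct.includeRight
    (ExteriorAlgebra.ιMulti ℂ k fun l => (Pi.single (v l) 1 : Fin n → ℂ))

lemma θWord_eq_prod (v : Fin k → Fin n) : θWord v = (List.ofFn fun l => θv (v l)).prod := by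
  rw [θWord, ExteriorAlgebra.ιMulti_apply, map_list_prod, List.map_ofFn]
  rfl

lemma θv_mul_θWord (i : Fin n) (v : Fin k → Fin n) :
    θv i * θWord v = θWord (Fin.cons i v : Fin (k + 1) → Fin n) := by
  simp [θWord_eq_prod]

lemma θWord_comp (v : Fin k → Fin n) (τ : Perm (Fin k)) :
    θWord (v ∘ τ) = sign τ • θWord v := by
  have h := (ExteriorAlgebra.ιMulti ℂ k).map_perm (fun l => (Pi.single (v l) 1 : Fin n → ℂ)) τ
  rw [θWord, θWord, Units.smul_def, ← map_zsmul, ← Units.smul_def, ← h]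
  rfl

lemma θWord_comp_swap {v : Fin k → Fin n} (hv : Function.Injective v) (f : Fin n → Fin n)
    (a b : Fin k) :
    θWord (f ∘ swap (v a) (v b) ∘ v) = sign (swap (v a) (v b)) • θWord (f ∘ v) := by
  rw [hv.swap_comp, ← Function.comp_assoc, θWord_comp, sign_swap_map hv]

lemma θWord_eq_zero_of_not_injective {v : Fin k → Fin n} (hv : ¬ Function.Injective v) :
    θWord v = 0 := by
  rw [θWord, AlternatingMap.map_eq_zero_of_not_injective, map_zero]
  exact fun h => hv fun a b hab => h (by simp only [hab])

lemma θWord_snoc (v : Fin k → Fin n) (i : Fin n) :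
    θWord (Fin.snoc v i : Fin (k + 1) → Fin n) =
      sign (finRotate (k + 1)) • θWord (Fin.cons i v : Fin (k + 1) → Fin n) := by
  rw [Fin.snoc_eq_cons_rotate]
  exact θWord_comp _ _

lemma span_ιMulti_comp_eq_top {R M ι : Type*} [CommRing R] [AddCommGroup M] [Module R M]
    {b : ι → M} (hb : Submodule.span R (Set.range b) = ⊤) :
    Submodule.span R {w | ∃ (k : ℕ) (v : Fin k → ι), w = ExteriorAlgebra.ιMulti R k (b ∘ v)} =
      ⊤ := by
  rw [eq_top_iff, ← ExteriorAlgebra.ιMulti_span, Submodule.span_le]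
  rintro _ ⟨⟨k, a⟩, rfl⟩
  have ha : ExteriorAlgebra.ιMulti R k a ∈ ⋀[R]^k M :=
    ExteriorAlgebra.ιMulti_range R k (Set.mem_range_self a)
  rw [← exteriorPower.ιMulti_span_fixedDegree_of_span_eq_top R k M hb] at ha
  refine Submodule.span_mono ?_ ha
  rintro _ ⟨a, ha, rfl⟩
  obtain ⟨v, rfl⟩ := Set.range_subset_range_iff_exists_comp.1 ha
  exact ⟨k, v, rfl⟩

lemma span_θWord_eq_top (n : ℕ) :
    Submodule.span (PP n) {f : SP n | ∃ (k : ℕ) (v : Fin k → Fin n), f = θWord v} = ⊤ := by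
  have h := congrArg (Submodule.baseChange (PP n))
    (span_ιMulti_comp_eq_top (Pi.basisFun ℂ (Fin n)).span_eq)
  rw [Submodule.baseChange_span, Submodule.baseChange_top] at h
  refine top_le_iff.1 (h.ge.trans (Submodule.span_mono ?_))
  rintro _ ⟨_, ⟨k, v, rfl⟩, rfl⟩
  refine ⟨k, v, ?_⟩
  simp [θWord, Function.comp_def]

end OddVariables

section Antisymmetrization

variable {n k : ℕ}

/-- The family `(σ p)_σ` of all translates of `p` under the diagonal action. -/
noncomputable def orbit : PP n →ₐ[ℂ] (Perm (Fin n) → PP n) :=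
  AlgHom.pi fun σ => diagRename σ

@[simp]
lemma orbit_apply (p : PP n) (σ : Perm (Fin n)) : orbit p σ = diagRename σ p := rfl

/-- The sum `∑_σ sgn(σ) φ_σ θ_{σ v 1} ⋯ θ_{σ v k}`, for a family `φ` of coefficients which need not
be an orbit. -/
noncomputable def permSum (v : Fin k → Fin n) : (Perm (Fin n) → PP n) →ₗ[PP n] SP n :=
  Fintype.linearCombination (PP n) fun σ => sign σ • θWord (σ ∘ v)

lemma permSum_apply (v : Fin k → Fin n) (φ : Perm (Fin n) → PP n) :
    permSum v φ = ∑ σ, sign σ • φ σ • θWord (σ ∘ v) :=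
  Finset.sum_congr rfl fun σ _ => smul_comm (φ σ) (sign σ) (θWord (σ ∘ v))

lemma permSum_comp_left (v : Fin k → Fin n) (τ : Perm (Fin n)) (p : PP n) :
    permSum (τ ∘ v) (orbit (diagRename τ p)) = sign τ • permSum v (orbit p) := by
  rw [permSum_apply, permSum_apply, Finset.smul_sum]
  refine Fintype.sum_equiv (Equiv.mulRight τ) _ _ fun σ => ?_
  rw [orbit_apply, orbit_apply, diagRename_diagRename, smul_smul, coe_mulRight, Perm.sign_mul,
    mul_left_comm, Int.units_mul_self, mul_one]
  rfl

lemma permSum_comp_right (v : Fin k → Fin n) (τ : Perm (Fin k)) (φ : Perm (Fin n) → PP n) :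
    permSum (v ∘ τ) φ = sign τ • permSum v φ := by
  rw [permSum_apply, permSum_apply, Finset.smul_sum]
  refine Finset.sum_congr rfl fun σ _ => ?_
  rw [← Function.comp_assoc, θWord_comp, smul_comm (sign τ), smul_comm (sign τ) (φ σ)]

lemma permSum_eq_zero_of_not_injective {v : Fin k → Fin n} (hv : ¬ Function.Injective v)
    (φ : Perm (Fin n) → PP n) : permSum v φ = 0 := by
  rw [permSum_apply]
  refine Finset.sum_eq_zero fun σ _ => ?_
  rw [θWord_eq_zero_of_not_injective fun h => hv h.of_comp, smul_zero, smul_zero]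

-- `neg_smul` and `smul_assoc` do not unify on `SP n`, whose additive group structure is found along
-- two instance paths; additivity of `LinearMap.toSpanSingleton` is insensitive to this.
lemma intCast_units_smul (u : ℤˣ) (f : SP n) : ((u : ℤ) : ℂ) • f = u • f := by
  simpa [Units.smul_def] using map_zsmul (LinearMap.toSpanSingleton ℂ (SP n) f) (u : ℤ) 1

lemma units_smul_smul (u : ℤˣ) (p : PP n) (f : SP n) : (u • p) • f = u • p • f :=
  map_zsmul (LinearMap.toSpanSingleton (PP n) (SP n) f) (u : ℤ) p

lemma diagAct_smul (σ : Perm (Fin n)) (p : PP n) (f : SP n) :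
    diagAct σ (p • f) = diagRename σ p • diagAct σ f := by
  rw [Algebra.smul_def p f, map_mul, Algebra.smul_def (diagRename σ p) (diagAct σ f)]
  congr 1
  simp [diagAct]

lemma diagAct_θWord (σ : Perm (Fin n)) (v : Fin k → Fin n) :
    diagAct σ (θWord v) = θWord (σ ∘ v) := by
  rw [θWord, θWord, diagAct, Algebra.TensorProduct.includeRight_apply,
    Algebra.TensorProduct.map_tmul, map_one, ExteriorAlgebra.map_apply_ιMulti]
  congr 2
  funext l i
  simp only [LinearMap.funLeft_apply, Function.comp_apply, Pi.single_apply, Perm.inv_eq_iff_eq]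

lemma Alt_smul_θWord (p : PP n) (v : Fin k → Fin n) : Alt (p • θWord v) = permSum v (orbit p) := by
  simp only [Alt, diagAct_smul, diagAct_θWord, intCast_units_smul, permSum_apply, orbit_apply]

lemma diagAct_diagAct (σ τ : Perm (Fin n)) (f : SP n) :
    diagAct σ (diagAct τ f) = diagAct (σ * τ) f := by
  rw [diagAct, diagAct, diagAct, ← AlgHom.comp_apply, ← Algebra.TensorProduct.map_comp]
  congr 2
  · ext
    simp
  · exact ExteriorAlgebra.map_comp_map _ _

lemma isAntisym_Alt (f : SP n) : IsAntisym (Alt f) := by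
  intro τ
  rw [Alt, map_sum, intCast_units_smul, Finset.smul_sum]
  refine Fintype.sum_equiv (Equiv.mulLeft τ) _ _ fun σ => ?_
  rw [map_smul, diagAct_diagAct, intCast_units_smul, intCast_units_smul, smul_smul,
    coe_mulLeft, Perm.sign_mul, ← mul_assoc, Int.units_mul_self, one_mul]

lemma IsAntisym.Alt_eq_nsmul {f : SP n} (hf : IsAntisym f) : Alt f = n.factorial • f := by
  simp only [Alt, hf _, intCast_units_smul, smul_smul, Int.units_mul_self, one_smul]
  simp [Fintype.card_perm]

lemma altGen_eq_permSum (hk : k ≤ n) (g : PP (n - k)) :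
    altGen n k hk g = permSum (Fin.castLE hk) (orbit (diagRename (emb n k hk) g)) := by
  rw [← Alt_smul_θWord, altGen, θprod, ← θWord_eq_prod]
  congr 1
  exact (Algebra.smul_def _ (θWord (Fin.castLE hk))).symm

end Antisymmetrization

section Generation

variable {n k : ℕ}

lemma mem_of_nsmul_mem (K : Type*) {R M : Type*} [DivisionRing K] [CharZero K] [Semiring R]
    [AddCommMonoid M] [Module R M] [Module K M] [SMul K R] [IsScalarTower K R M]
    {N : Submodule R M} {m : ℕ} (hm : m ≠ 0) {x : M} (h : m • x ∈ N) : x ∈ N := by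
  rwa [← Nat.cast_smul_eq_nsmul K, N.smul_mem_iff (Nat.cast_ne_zero.2 hm)] at h

/-- The `ℂ[x,y]`-module spanned by the generators `altGen n k hk g`. -/
noncomputable def altGenSpan (n : ℕ) : Submodule (PP n) (SP n) :=
  Submodule.span (PP n)
    {b | ∃ (k : ℕ) (hk : k ≤ n) (g : PP (n - k)), IsAntisymP g ∧ b = altGen n k hk g}

lemma isAntisymP_sum_sign_smul {m : ℕ} (g : PP m) :
    IsAntisymP (∑ τ : Perm (Fin m), sign τ • diagRename τ g) := by
  intro ρ
  rw [map_sum, Int.cast_smul_eq_zsmul, ← Units.smul_def, Finset.smul_sum]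
  refine Fintype.sum_equiv (Equiv.mulLeft ρ) _ _ fun τ => ?_
  rw [Units.smul_def, map_zsmul, ← Units.smul_def, diagRename_diagRename, smul_smul, coe_mulLeft,
    Perm.sign_mul, ← mul_assoc, Int.units_mul_self, one_mul]
  rfl

lemma emb_injective (hk : k ≤ n) : Function.Injective (emb n k hk) := fun _ _ h =>
  Fin.ext (Nat.add_left_cancel (congrArg Fin.val h))

lemma range_emb (hk : k ≤ n) : Set.range (emb n k hk) = {l : Fin n | k ≤ (l : ℕ)} := by
  ext l
  refine ⟨?_, fun hl => ⟨⟨l - k, Nat.sub_lt_sub_right hl l.isLt⟩, Fin.ext (Nat.add_sub_cancel' hl)⟩⟩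
  rintro ⟨a, rfl⟩
  exact Nat.le_add_right k a

lemma permSum_orbit_diagRename_emb (hk : k ≤ n) (τ : Perm (Fin (n - k))) (g : PP (n - k)) :
    permSum (Fin.castLE hk) (orbit (diagRename (emb n k hk) (diagRename τ g))) =
      sign τ • permSum (Fin.castLE hk) (orbit (diagRename (emb n k hk) g)) := by
  let e : Fin (n - k) ↪ Fin n := ⟨emb n k hk, emb_injective hk⟩
  have hemb : emb n k hk ∘ τ = τ.viaFintypeEmbedding e ∘ emb n k hk :=
    funext fun l => (τ.viaFintypeEmbedding_apply_image e l).symm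
  have hhead : Fin.castLE hk = τ.viaFintypeEmbedding e ∘ Fin.castLE hk := by
    funext l
    refine (τ.viaFintypeEmbedding_apply_notMem_range e ?_).symm
    rw [show Set.range e = _ from range_emb hk]
    exact l.isLt.not_ge
  rw [diagRename_diagRename, hemb, ← diagRename_diagRename]
  nth_rw 1 [hhead]
  rw [permSum_comp_left, viaFintypeEmbedding_sign]

lemma permSum_orbit_diagRename_emb_mem (hk : k ≤ n) (g : PP (n - k)) :
    permSum (Fin.castLE hk) (orbit (diagRename (emb n k hk) g)) ∈ altGenSpan n := by
  refine mem_of_nsmul_mem ℂ (Fintype.card_ne_zero (α := Perm (Fin (n - k)))) ?_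
  have halt : altGen n k hk (∑ τ : Perm (Fin (n - k)), sign τ • diagRename τ g) =
      Fintype.card (Perm (Fin (n - k))) •
        permSum (Fin.castLE hk) (orbit (diagRename (emb n k hk) g)) := by
    simp only [altGen_eq_permSum, map_sum, Units.smul_def, map_zsmul]
    simp only [permSum_orbit_diagRename_emb, ← Units.smul_def, smul_smul, Int.units_mul_self,
      one_smul, Finset.sum_const, Finset.card_univ]
  rw [← halt]
  exact Submodule.subset_span ⟨k, hk, _, isAntisymP_sum_sign_smul g, rfl⟩

lemma permSum_orbit_swap {v : Fin k → Fin n} (hv : Function.Injective v) (a b : Fin k)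
    (p : PP n) :
    permSum v (orbit (diagRename (swap (v a) (v b)) p)) = permSum v (orbit p) := by
  have h := permSum_comp_left v (swap (v a) (v b)) p
  rw [hv.swap_comp, permSum_comp_right, sign_swap_map hv] at h
  exact smul_left_cancel _ h

lemma permSum_orbit_diagRename_const_mul {v : Fin k → Fin n} (hv : Function.Injective v)
    {a b : Fin k} {U : Set (Fin n)} (ha : v a ∉ U) (hb : v b ∉ U) {p ψ : PP n}
    (hp : p ∈ supportedOn {v a}) (hψ : ψ ∈ supportedOn U) :
    permSum v (orbit (diagRename (fun _ : Fin n => v b) p * ψ)) = permSum v (orbit (p * ψ)) := by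
  have hp' : diagRename (swap (v a) (v b)) p = diagRename (fun _ : Fin n => v b) p :=
    diagRename_congr (fun l hl => by rw [Set.mem_singleton_iff.1 hl, swap_apply_left]) hp
  have hψ' : diagRename (swap (v a) (v b)) ψ = diagRename id ψ :=
    diagRename_congr (fun l hl => swap_apply_of_ne_of_ne (ne_of_mem_of_not_mem hl ha)
      (ne_of_mem_of_not_mem hl hb)) hψ
  rw [diagRename_id] at hψ'
  rw [← permSum_orbit_swap hv a b (p * ψ), map_mul (diagRename _), hp', hψ']

lemma orbit_mul_of_invariant {s : PP n} (hs : ∀ σ : Perm (Fin n), diagRename σ s = s) (p : PP n) :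
    orbit (s * p) = s • orbit p :=
  funext fun σ => by rw [orbit_apply, map_mul, hs, Pi.smul_apply, smul_eq_mul, orbit_apply]

/-- The sum `∑_j p(x_j, y_j)` is invariant, so `permSum v (orbit (p(x_i, y_i) ψ))` can be expressed
through the analogous elements with `j ≠ i`. -/
lemma permSum_orbit_mul_mem {N : Submodule (PP n) (SP n)} {v : Fin k → Fin n}
    (hv : Function.Injective v) {U : Set (Fin n)} (hU : Uᶜ ⊆ Set.range v)
    (hN : ∀ ψ ∈ supportedOn U, permSum v (orbit ψ) ∈ N)
    {i : Fin n} (hi : i ∉ U) {p ψ : PP n} (hp : p ∈ supportedOn {i}) (hψ : ψ ∈ supportedOn U) :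
    permSum v (orbit (p * ψ)) ∈ N := by
  classical
  let q (j : Fin n) : PP n := diagRename (fun _ : Fin n => j) p
  have hinv (σ : Perm (Fin n)) : diagRename σ (∑ j, q j) = ∑ j, q j := by
    simp only [q, map_sum, diagRename_diagRename]
    exact Equiv.sum_comp σ q
  have hsum : ∑ j, permSum v (orbit (q j * ψ)) = (∑ j, q j) • permSum v (orbit ψ) := by
    rw [← map_smul, ← orbit_mul_of_invariant hinv, Finset.sum_mul, map_sum, map_sum]
  have hin (j : Fin n) (hj : j ∈ U) : permSum v (orbit (q j * ψ)) ∈ N :=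
    hN _ (mul_mem (diagRename_mem_supportedOn (fun _ => hj) p) hψ)
  have hout (j : Fin n) (hj : j ∉ U) :
      permSum v (orbit (q j * ψ)) = permSum v (orbit (p * ψ)) := by
    obtain ⟨⟨a, rfl⟩, ⟨b, rfl⟩⟩ := hU hi, hU hj
    exact permSum_orbit_diagRename_const_mul hv hi hj hp hψ
  have hcard : (Finset.univ.filter (· ∉ U)).card ≠ 0 :=
    Finset.card_ne_zero_of_mem (Finset.mem_filter.2 ⟨Finset.mem_univ i, hi⟩)
  rw [← Finset.sum_filter_add_sum_filter_not _ (· ∈ U),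
    Finset.sum_eq_card_nsmul fun j hj => hout j (Finset.mem_filter.1 hj).2] at hsum
  refine mem_of_nsmul_mem ℂ hcard ?_
  rw [eq_sub_of_add_eq' hsum]
  exact N.sub_mem (N.smul_mem _ (hN ψ hψ))
    (N.sum_mem fun j hj => hin j (Finset.mem_filter.1 hj).2)

lemma permSum_orbit_mem_of_supportedOn (hk : k ≤ n) (T : Finset (Fin n)) :
    ∀ p ∈ supportedOn (T ∪ {l : Fin n | k ≤ (l : ℕ)}),
      permSum (Fin.castLE hk) (orbit p) ∈ altGenSpan n := by
  induction T using Finset.induction_on with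
  | empty =>
    intro p hp
    rw [Finset.coe_empty, Set.empty_union, ← range_emb hk] at hp
    obtain ⟨g, rfl⟩ := supportedOn_range_le _ hp
    exact permSum_orbit_diagRename_emb_mem hk g
  | insert i T _ ih =>
    rw [Finset.coe_insert, Set.insert_union]
    by_cases hi : i ∈ (T ∪ {l : Fin n | k ≤ (l : ℕ)} : Set (Fin n))
    · rwa [Set.insert_eq_of_mem hi]
    intro p hp
    rw [← Subalgebra.mem_toSubmodule, toSubmodule_supportedOn_insert] at hp
    induction hp using Submodule.mul_induction_on' with
    | mem_mul_mem a ha b hb =>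
      refine permSum_orbit_mul_mem (Fin.castLE_injective hk) (fun j hj => ?_) ih hi ha hb
      exact ⟨⟨j, not_le.1 fun h => hj (Or.inr h)⟩, rfl⟩
    | add a _ b _ ha hb =>
      rw [map_add, map_add]
      exact add_mem ha hb

lemma exists_perm_comp_castLE (hk : k ≤ n) {v : Fin k → Fin n} (hv : Function.Injective v) :
    ∃ τ : Perm (Fin n), τ ∘ Fin.castLE hk = v := by
  have := Equiv.Perm.isMultiplyPretransitive (Fin n) k
  obtain ⟨τ, hτ⟩ := MulAction.exists_smul_eq (Perm (Fin n)) (Fin.castLEEmb hk) ⟨v, hv⟩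
  exact ⟨τ, congrArg DFunLike.coe hτ⟩

lemma permSum_orbit_mem_altGenSpan (v : Fin k → Fin n) (p : PP n) :
    permSum v (orbit p) ∈ altGenSpan n := by
  by_cases hv : Function.Injective v
  · have hk : k ≤ n := by simpa using Fintype.card_le_of_injective v hv
    obtain ⟨τ, rfl⟩ := exists_perm_comp_castLE hk hv
    have hp : diagRename τ (diagRename τ.symm p) = p := by
      rw [diagRename_diagRename, self_comp_symm, diagRename_id]
    rw [← hp, permSum_comp_left, Submodule.smul_mem_iff']
    refine permSum_orbit_mem_of_supportedOn hk Finset.univ _ ?_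
    rw [Finset.coe_univ, Set.univ_union, supportedOn_univ]
    exact Algebra.mem_top
  · rw [permSum_eq_zero_of_not_injective hv]
    exact zero_mem _

lemma Alt_mem_altGenSpan (f : SP n) : Alt f ∈ altGenSpan n := by
  induction (span_θWord_eq_top n).ge (Submodule.mem_top (x := f)) using
    Submodule.closure_induction with
  | zero => simp only [Alt, map_zero, smul_zero, Finset.sum_const_zero, zero_mem]
  | add f g _ _ hf hg =>
    simp only [Alt, map_add, smul_add, Finset.sum_add_distrib]
    exact add_mem hf hg
  | smul_mem p _ h =>
    obtain ⟨k, v, rfl⟩ := h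
    rw [Alt_smul_θWord]
    exact permSum_orbit_mem_altGenSpan v p

lemma IsAntisym.mem_altGenSpan {f : SP n} (hf : IsAntisym f) : f ∈ altGenSpan n :=
  mem_of_nsmul_mem ℂ n.factorial_ne_zero (hf.Alt_eq_nsmul ▸ Alt_mem_altGenSpan f)

end Generation

section OddMultiplication

variable {n k : ℕ}

/-- The `PP n`-algebra of families of coefficients generated by the orbits. -/
noncomputable def orbitAlgebra (n : ℕ) : Subalgebra (PP n) (Perm (Fin n) → PP n) :=
  Algebra.adjoin (PP n) (Set.range orbit)

lemma permSum_mem_of_mem_orbitAlgebra (v : Fin k → Fin n) {φ : Perm (Fin n) → PP n}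
    (hφ : φ ∈ orbitAlgebra n) : permSum v φ ∈ altGenSpan n := by
  rw [orbitAlgebra, ← Subalgebra.mem_toSubmodule, Algebra.adjoin_eq_span,
    MonoidHom.mclosure_range] at hφ
  have hle : Submodule.span (PP n) (MonoidHom.mrange (orbit (n := n)) : Set _) ≤
      (altGenSpan n).comap (permSum v) := by
    rw [Submodule.span_le]
    rintro _ ⟨p, rfl⟩
    exact permSum_orbit_mem_altGenSpan v p
  exact hle hφ

lemma update_mem_orbitAlgebra (c i : Fin n) (p : PP n) :
    (fun σ : Perm (Fin n) => diagRename (Function.update σ c i) p) ∈ orbitAlgebra n := by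
  have hvar (s : Fin n ⊕ Fin n) :
      (fun σ : Perm (Fin n) => diagRename (Function.update σ c i) (X s)) ∈ orbitAlgebra n := by
    by_cases hs : Sum.elim id id s = c
    · convert (orbitAlgebra n).algebraMap_mem (X (Sum.map (fun _ => i) (fun _ => i) s)) using 2
      subst hs
      cases s <;> simp
    · have horbit : orbit (X s) ∈ orbitAlgebra n := Algebra.subset_adjoin ⟨X s, rfl⟩
      convert horbit using 2 with σ
      cases s <;> simp_all
  induction p using MvPolynomial.induction_on with
  | C a =>
    simp only [diagRename, rename_C]
    exact (orbitAlgebra n).algebraMap_mem (C a)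
  | add p q hp hq =>
    simp only [map_add]
    exact add_mem hp hq
  | mul_X p s hp =>
    simp only [map_mul]
    exact mul_mem hp (hvar s)

lemma θv_mul_altGen (i : Fin n) (hk : k ≤ n) (g : PP (n - k)) :
    θv i * altGen n k hk g = sign (finRotate (k + 1)) • ∑ σ : Perm (Fin n),
      sign σ • diagRename (σ ∘ emb n k hk) g •
        θWord (Fin.snoc (σ ∘ Fin.castLE hk) i : Fin (k + 1) → Fin n) := by
  rw [altGen_eq_permSum, permSum_apply, Finset.mul_sum, Finset.smul_sum]
  refine Finset.sum_congr rfl fun σ _ => ?_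
  rw [mul_smul_comm, mul_smul_comm, θv_mul_θWord, orbit_apply, diagRename_diagRename, θWord_snoc,
    ← smul_comm (sign (finRotate (k + 1))) (diagRename _ g),
    ← smul_comm (sign (finRotate (k + 1))) (sign σ), smul_smul, Int.units_mul_self, one_smul]

lemma swap_comp_castLE (hk : k ≤ n) {l m : Fin n} (hl : k ≤ l) (hm : k ≤ m) :
    swap l m ∘ Fin.castLE hk = Fin.castLE hk := by
  funext j
  exact swap_apply_of_ne_of_ne (Fin.ne_of_lt (j.isLt.trans_le hl))
    (Fin.ne_of_lt (j.isLt.trans_le hm))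

lemma update_comp_swap_comp_emb (hk : k < n) (σ : Perm (Fin n)) (i : Fin n) {l : Fin n}
    (hl : l ≤ k) :
    Function.update (σ * swap l ⟨k, hk⟩) ⟨k, hk⟩ i ∘ emb n k hk.le =
      Function.update σ ⟨k, hk⟩ i ∘ emb n k hk.le := by
  funext a
  by_cases ha : emb n k hk.le a = ⟨k, hk⟩
  · simp only [Function.comp_apply, ha, Function.update_self]
  · have hal : emb n k hk.le a ≠ l := by
      rintro rfl
      exact ha (Fin.ext (hl.antisymm (Nat.le_add_right k a)))
    simp only [Function.comp_apply, Function.update_of_ne ha, Perm.mul_apply,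
      swap_apply_of_ne_of_ne hal ha]

lemma sum_θWord_snoc_eq (hk : k < n) (i : Fin n) {g : PP (n - k)} (hg : IsAntisymP g) :
    ∑ σ : Perm (Fin n), sign σ • diagRename (σ ∘ emb n k hk.le) g •
        θWord (Fin.snoc (σ ∘ Fin.castLE hk.le) i : Fin (k + 1) → Fin n) =
      (Finset.univ.filter fun l : Fin n => k ≤ l).card •
        ∑ σ : Perm (Fin n) with σ ⟨k, hk⟩ = i, sign σ • diagRename (σ ∘ emb n k hk.le) g •
          θWord (σ ∘ Fin.castLE (Nat.succ_le_of_lt hk)) := by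
  rw [sum_perm_eq_card_smul_sum (c := ⟨k, hk⟩) (i := i) (Finset.univ.filter fun l : Fin n => k ≤ l)]
  · refine congrArg _ (Finset.sum_congr rfl fun σ hσ => ?_)
    rw [← (Finset.mem_filter.1 hσ).2]
    exact congrArg (fun w => _ • _ • θWord w)
      (Fin.snoc_init_self (σ ∘ Fin.castLE (Nat.succ_le_of_lt hk)))
  · intro σ _ l hl
    rw [Finset.mem_filter] at hl
    obtain ⟨a, rfl⟩ := (range_emb hk.le).ge hl.2
    obtain ⟨b, hb⟩ : ⟨k, hk⟩ ∈ Set.range (emb n k hk.le) := (range_emb hk.le).ge (le_refl k)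
    rw [Perm.coe_mul, Function.comp_assoc, Function.comp_assoc, swap_comp_castLE hk.le hl.2 le_rfl,
      ← hb, hg.diagRename_comp_swap (emb_injective _), Perm.sign_mul, units_smul_smul, smul_smul,
      mul_assoc, Int.units_mul_self, mul_one]
  · intro σ l hl hσ
    have hlk : l < k := by simpa using hl
    rw [θWord_eq_zero_of_not_injective, smul_zero, smul_zero]
    refine fun h => Fin.castSucc_ne_last ⟨l, hlk⟩ (h ?_)
    rw [Fin.snoc_castSucc, Fin.snoc_last]
    exact hσ

lemma permSum_diagRename_update_eq (hk : k < n) (i : Fin n) {g : PP (n - k)} (hg : IsAntisymP g) :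
    permSum (Fin.castLE (Nat.succ_le_of_lt hk)) (fun σ =>
        diagRename (Function.update σ ⟨k, hk⟩ i ∘ emb n k hk.le) g) =
      (Finset.univ.filter fun l : Fin n => l ≤ k).card •
        ∑ σ : Perm (Fin n) with σ ⟨k, hk⟩ = i, sign σ • diagRename (σ ∘ emb n k hk.le) g •
          θWord (σ ∘ Fin.castLE (Nat.succ_le_of_lt hk)) := by
  rw [permSum_apply, sum_perm_eq_card_smul_sum (c := ⟨k, hk⟩) (i := i)
    (Finset.univ.filter fun l : Fin n => l ≤ k)]
  · refine congrArg _ (Finset.sum_congr rfl fun σ hσ => ?_)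
    rw [← (Finset.mem_filter.1 hσ).2, Function.update_eq_self]
  · intro σ _ l hl
    have hlk : l ≤ k := (Finset.mem_filter.1 hl).2
    have hodd : θWord ((σ * swap l ⟨k, hk⟩) ∘ Fin.castLE (Nat.succ_le_of_lt hk)) =
        sign (swap l ⟨k, hk⟩) • θWord (σ ∘ Fin.castLE (Nat.succ_le_of_lt hk)) :=
      θWord_comp_swap (Fin.castLE_injective (Nat.succ_le_of_lt hk)) σ
        ⟨l, Nat.lt_succ_of_le hlk⟩ (Fin.last k)
    rw [update_comp_swap_comp_emb hk σ i hlk, hodd, Perm.sign_mul,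
      ← smul_comm (sign (swap _ _)) (diagRename _ g), smul_smul, mul_assoc, Int.units_mul_self,
      mul_one]
  · intro σ l hl hσ
    have hkl : k < l := by simpa using hl
    obtain ⟨a, rfl⟩ := (range_emb hk.le).ge hkl.le
    obtain ⟨b, hb⟩ : ⟨k, hk⟩ ∈ Set.range (emb n k hk.le) := (range_emb hk.le).ge (le_refl k)
    have hne : emb n k hk.le a ≠ ⟨k, hk⟩ := Fin.ne_of_gt hkl
    rw [hg.diagRename_eq_zero_of_not_injective, zero_smul, smul_zero]
    refine fun h => hne (hb ▸ congrArg _ (h ?_))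
    rw [Function.comp_apply, Function.comp_apply, hb, Function.update_self,
      Function.update_of_ne hne, hσ]

lemma θv_mul_altGen_mem_altGenSpan (i : Fin n) (hk : k ≤ n) {g : PP (n - k)} (hg : IsAntisymP g) :
    θv i * altGen n k hk g ∈ altGenSpan n := by
  rw [θv_mul_altGen, Submodule.smul_mem_iff']
  obtain rfl | hlt := hk.eq_or_lt
  · refine sum_mem fun σ _ => ?_
    have hinj : ¬ Function.Injective
        (Fin.snoc (σ ∘ Fin.castLE hk) i : Fin (k + 1) → Fin k) := fun h =>
      (Fintype.card_le_of_injective _ h).not_gt (by simp)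
    rw [θWord_eq_zero_of_not_injective hinj, smul_zero, smul_zero]
    exact zero_mem _
  have hcard : (Finset.univ.filter fun l : Fin n => l ≤ k).card ≠ 0 :=
    Finset.card_ne_zero_of_mem (Finset.mem_filter.2 ⟨Finset.mem_univ ⟨k, hlt⟩, le_rfl⟩)
  rw [sum_θWord_snoc_eq hlt i hg]
  refine nsmul_mem (mem_of_nsmul_mem ℂ hcard ?_) _
  rw [← permSum_diagRename_update_eq hlt i hg]
  simp only [← diagRename_diagRename]
  exact permSum_mem_of_mem_orbitAlgebra _ (update_mem_orbitAlgebra _ _ _)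

lemma θv_mul_mem_altGenSpan (i : Fin n) {b : SP n} (hb : b ∈ altGenSpan n) :
    θv i * b ∈ altGenSpan n := by
  refine (Submodule.span_le
    (p := (altGenSpan n).comap (LinearMap.mulLeft (PP n) (θv i)))).2 ?_ hb
  rintro _ ⟨k, hk, g, hg, rfl⟩
  exact θv_mul_altGen_mem_altGenSpan i hk hg

lemma θWord_mul_mem_altGenSpan (v : Fin k → Fin n) {b : SP n} (hb : b ∈ altGenSpan n) :
    θWord v * b ∈ altGenSpan n := by
  induction k with
  | zero => simpa only [θWord_eq_prod, List.ofFn_zero, List.prod_nil, one_mul] using hb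
  | succ k ih =>
    rw [← Fin.cons_self_tail v, ← θv_mul_θWord, mul_assoc]
    exact θv_mul_mem_altGenSpan _ (ih _)

lemma mul_mem_altGenSpan (f : SP n) {b : SP n} (hb : b ∈ altGenSpan n) :
    f * b ∈ altGenSpan n := by
  induction (span_θWord_eq_top n).ge (Submodule.mem_top (x := f)) using
    Submodule.closure_induction with
  | zero =>
    rw [zero_mul]
    exact zero_mem _
  | add f g _ _ hf hg =>
    rw [add_mul]
    exact add_mem hf hg
  | smul_mem p _ h =>
    obtain ⟨k, v, rfl⟩ := h
    rw [smul_mul_assoc]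
    exact Submodule.smul_mem _ _ (θWord_mul_mem_altGenSpan v hb)

end OddMultiplication

end AntisymmetricIdeal

/-- The ideal `𝒥_n` generated by the diagonal antisymmetric elements of the
super-polynomial ring is generated, as a module over `ℂ[x,y]`, by the elements
`Alt(g(x_{k+1},…,x_n, y_{k+1},…,y_n) θ₁⋯θ_k)` for `0 ≤ k ≤ n` and `g` an
antisymmetric polynomial for the diagonal `S_{n-k}`-action. -/
theorem antisym_ideal_generators (n : ℕ) :
    (Submodule.span (SP n) {g : SP n | IsAntisym g}).restrictScalars (PP n) =
      Submodule.span (PP n)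
        {b : SP n | ∃ (k : ℕ) (hk : k ≤ n) (g : PP (n - k)),
          IsAntisymP g ∧ b = altGen n k hk g} := by
  refine le_antisymm (fun f hf => ?_) (Submodule.span_le.2 ?_)
  · change f ∈ altGenSpan n
    rw [Submodule.restrictScalars_mem] at hf
    induction hf using Submodule.span_induction with
    | mem f hf => exact IsAntisym.mem_altGenSpan hf
    | zero => exact zero_mem _
    | add f g _ _ hf hg => exact add_mem hf hg
    | smul c f _ hf => exact mul_mem_altGenSpan c hf
  · rintro _ ⟨k, hk, g, -, rfl⟩
    exact Submodule.subset_span (isAntisym_Alt _)
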